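/- Let I ⊆ S = K[x_1,…,x_n] be a monomial ideal with |G(I)| = m, where m is odd. If there exists a prime ideal P ∈ Ass(S/I) with height(P) ≥ m − 1, then sdepth_S(I) = n − ⌊m/2⌋. -/

import Mathlib

open MvPolynomial

/-- The Stanley space `u·K[Z]` inside the polynomial ring `K[x_i : i ∈ σ]`:
the `K`-span of all monomials `x^(u+v)` with `supp v ⊆ Z`. -/
noncomputable def stanleySpace (K : Type*) [Field K] {σ : Type*} (u : σ →₀ ℕ) (Z : Set σ) :
    Submodule K (MvPolynomial σ K) :=
  Submodule.span K
    ((fun v : σ →₀ ℕ => (monomial (u + v) (1 : K) : MvPolynomial σ K)) ''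
      {v | (v.support : Set σ) ⊆ Z})

/-- `(u, Z)` (indexed by a finite type `ι`) is a Stanley decomposition of the monomial
ideal `I`: the Stanley spaces `x^(u i)·K[Z i]` are independent and their (direct) sum is `I`
as a `K`-vector space.  (Inside the polynomial ring each Stanley space is automatically a
free `K[Z]`-module.) -/
def IsStanleyDecompOfIdeal {K σ : Type*} [Field K] {ι : Type} [Fintype ι]
    (I : Ideal (MvPolynomial σ K)) (u : ι → (σ →₀ ℕ)) (Z : ι → Finset σ) : Prop :=
  iSupIndep (fun i => stanleySpace K (u i) (Z i)) ∧
    (⨆ i, stanleySpace K (u i) (Z i)) = Submodule.restrictScalars K I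

/-- The Stanley depth of a monomial ideal `I`: the largest `d` such that there is a Stanley
decomposition of `I` all of whose Stanley spaces `u_i K[Z_i]` satisfy `|Z_i| ≥ d`. -/
noncomputable def sdepthIdeal {K σ : Type*} [Field K] (I : Ideal (MvPolynomial σ K)) : ℕ :=
  sSup {d | ∃ (ι : Type) (_ : Fintype ι) (_ : Nonempty ι) (u : ι → (σ →₀ ℕ))
    (Z : ι → Finset σ), IsStanleyDecompOfIdeal I u Z ∧ ∀ i, d ≤ (Z i).card}

/-- `(u, Z)` is a Stanley decomposition of `S/I`:  each Stanley space `x^(u i)·K[Z i]` meets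
`I` trivially (equivalently, its image in `S/I` is a free `K[Z i]`-module), the images of the
Stanley spaces in `S/I` are independent, and they sum to `S/I`. -/
def IsStanleyDecompOfQuotient {K σ : Type*} [Field K] {ι : Type} [Fintype ι]
    (I : Ideal (MvPolynomial σ K)) (u : ι → (σ →₀ ℕ)) (Z : ι → Finset σ) : Prop :=
  (∀ i, Disjoint (stanleySpace K (u i) (Z i)) (Submodule.restrictScalars K I)) ∧
    iSupIndep (fun i =>
      (stanleySpace K (u i) (Z i)).map (Ideal.Quotient.mkₐ K I).toLinearMap) ∧
    (⨆ i, (stanleySpace K (u i) (Z i)).map (Ideal.Quotient.mkₐ K I).toLinearMap) = ⊤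

/-- The Stanley depth of `S/I` for a monomial ideal `I`. -/
noncomputable def sdepthQuot {K σ : Type*} [Field K] (I : Ideal (MvPolynomial σ K)) : ℕ :=
  sSup {d | ∃ (ι : Type) (_ : Fintype ι) (_ : Nonempty ι) (u : ι → (σ →₀ ℕ))
    (Z : ι → Finset σ), IsStanleyDecompOfQuotient I u Z ∧ ∀ i, d ≤ (Z i).card}

/-- A monomial ideal: an ideal generated by monomials. -/
def IsMonomialIdeal {K σ : Type*} [Field K] (I : Ideal (MvPolynomial σ K)) : Prop :=
  ∃ A : Set (σ →₀ ℕ), I = Ideal.span ((fun a => (monomial a (1 : K) : MvPolynomial σ K)) '' A)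

/-- The (exponents of the) minimal monomial generators of a monomial ideal `I`:
monomials in `I` that are not proper multiples of monomials in `I`. -/
def minimalGenerators {K σ : Type*} [Field K] (I : Ideal (MvPolynomial σ K)) :
    Set (σ →₀ ℕ) :=
  {a | (monomial a (1 : K) : MvPolynomial σ K) ∈ I ∧
    ∀ b < a, (monomial b (1 : K) : MvPolynomial σ K) ∉ I}

/-- The depth (w.r.t. the maximal graded ideal `m = (x_1,…,x_n)`) of a module `M` over the
polynomial ring: the maximal length of a regular sequence on `M` consisting of elements
of `m`. -/
noncomputable def mdepth (K σ : Type*) [Field K] (M : Type*) [AddCommGroup M]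
    [Module (MvPolynomial σ K) M] : ℕ :=
  sSup {k | ∃ rs : List (MvPolynomial σ K), rs.length = k ∧
    (∀ r ∈ rs, r ∈ Ideal.span (Set.range (X : σ → MvPolynomial σ K))) ∧
    RingTheory.Sequence.IsRegular M rs}

/-- The height of a prime ideal: the height of the corresponding point
of the prime spectrum, i.e. the supremum of lengths of chains of primes below it. -/
noncomputable def primeHt {R : Type*} [CommRing R] (P : Ideal R) (hP : P.IsPrime) : ℕ∞ :=
  Order.height (⟨P, hP⟩ : PrimeSpectrum R)

/-!
In terms of exponents, a Stanley decomposition of a monomial ideal `I` is a partition of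
`{w | x^w ∈ I}` into cones `u + ℕ^Z`, so the Stanley depth can be bounded combinatorially.

Upper bound: the prime `P` is generated by variables, and `P = I : f` for a polynomial `f` with as
few terms as possible. An exponent `v` of `f` then satisfies `x^v ∉ I` and `x_i x^v ∈ I` for all
`x_i ∈ P`, of which there are at least `ht P`. In a partition, let `u_i + ℕ^{Z_i}` be the cone
containing `v + e_i`. If `j ∈ Z_i` and `i ∈ Z_j` with `i ≠ j`, then `v + e_i + e_j` lies in both
cones, so they coincide; this is impossible, since `v` lies outside them. Counting pairs, some `Z_i`
omits at least `⌊ht P / 2⌋` variables.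

Lower bound: arrange an odd number `m` of generators on a cycle and record which of them divide a
given monomial of `I`. Starting at a generator that does, cut this cyclic word into blocks `T` and
`F*`. The monomials with prescribed blocks are the common multiples of the generators at the blocks
`T`, of which there is at least one because `m` is odd, that are divisible by none of the at most
`⌊m / 2⌋` generators opening the blocks `F*`. Removing the multiples of one monomial from a cone
costs one dimension.
-/

open Finset Function

section ExponentSets

theorem iSup_restrictSupport (R : Type*) [CommSemiring R] {σ : Type*} {ι : Sort*}
    (s : ι → Set (σ →₀ ℕ)) :
    ⨆ i, restrictSupport R (s i) = restrictSupport R (⋃ i, s i) := by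
  simp only [restrictSupport_eq_span, Set.image_iUnion, Submodule.span_iUnion]

theorem disjoint_restrictSupport_iff {R : Type*} [CommSemiring R] [Nontrivial R] {σ : Type*}
    {s t : Set (σ →₀ ℕ)} :
    Disjoint (restrictSupport R s) (restrictSupport R t) ↔ Disjoint s t := by
  constructor
  · intro h
    rw [Set.disjoint_left]
    intro w hs ht
    have hw : (monomial w (1 : R)) = 0 :=
      Submodule.disjoint_def.mp h _ (by simp [hs]) (by simp [ht])
    simp at hw
  · intro h
    simpa only [restrictSupport_eq_span, coe_basisMonomials] using
      (basisMonomials σ R).linearIndependent.disjoint_span_image h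

theorem iSupIndep_restrictSupport_iff {R : Type*} [CommSemiring R] [Nontrivial R] {σ ι : Type*}
    {s : ι → Set (σ →₀ ℕ)} :
    iSupIndep (fun i => restrictSupport R (s i)) ↔ Pairwise (Disjoint on s) := by
  simp only [iSupIndep_def, iSup_restrictSupport, disjoint_restrictSupport_iff,
    Set.disjoint_iUnion_right]
  exact ⟨fun h i j hij => h i j hij.symm, fun h i j hij => h hij.symm⟩

theorem restrictSupport_injective (R : Type*) [CommSemiring R] [Nontrivial R] (σ : Type*) :
    Injective (restrictSupport R : Set (σ →₀ ℕ) → Submodule R (MvPolynomial σ R)) := by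
  intro s t hst
  ext w
  simpa using SetLike.ext_iff.mp hst (monomial w (1 : R))

variable {K σ : Type*} [Field K] {I : Ideal (MvPolynomial σ K)}

/-- The exponents of the monomials lying in the ideal `I`. -/
def exponentSet (I : Ideal (MvPolynomial σ K)) : Set (σ →₀ ℕ) :=
  {w | monomial w (1 : K) ∈ I}

theorem isUpperSet_exponentSet (I : Ideal (MvPolynomial σ K)) : IsUpperSet (exponentSet I) :=
  fun _ _ hab ha => I.mem_of_dvd (monomial_dvd_monomial.mpr ⟨.inr hab, dvd_rfl⟩) ha

theorem isMonomialIdeal_iff :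
    IsMonomialIdeal I ↔ ∀ p ∈ I, ∀ w ∈ p.support, w ∈ exponentSet I := by
  classical
  constructor
  · rintro ⟨A, rfl⟩ p hp w hw
    simpa [exponentSet, mem_ideal_span_monomial_image, support_monomial] using
      mem_ideal_span_monomial_image.mp hp w hw
  · refine fun h => ⟨exponentSet I, le_antisymm (fun p hp => ?_) (Ideal.span_le.mpr ?_)⟩
    · exact mem_ideal_span_monomial_image.mpr fun w hw => ⟨w, h p hp w hw, le_rfl⟩
    · rintro _ ⟨w, hw, rfl⟩
      exact hw

theorem mem_of_forall_mem_exponentSet {p : MvPolynomial σ K}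
    (h : ∀ w ∈ p.support, w ∈ exponentSet I) : p ∈ I := by
  rw [← support_sum_monomial_coeff p]
  refine I.sum_mem fun w hw => ?_
  rw [← mul_one (coeff w p), ← C_mul_monomial]
  exact I.mul_mem_left _ (h w hw)

theorem IsMonomialIdeal.restrictScalars_eq (hI : IsMonomialIdeal I) :
    I.restrictScalars K = restrictSupport K (exponentSet I) := by
  ext p
  exact ⟨isMonomialIdeal_iff.mp hI p, mem_of_forall_mem_exponentSet⟩

theorem iUnion_Ici_minimalGenerators (I : Ideal (MvPolynomial σ K)) :
    ⋃ a : minimalGenerators I, Set.Ici a.1 = exponentSet I := by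
  ext w
  simp only [Set.mem_iUnion, Set.mem_Ici, Subtype.exists, exists_prop]
  constructor
  · rintro ⟨a, ha, haw⟩
    exact isUpperSet_exponentSet I haw ha.1
  · intro hw
    obtain ⟨a, haw, ha⟩ := exists_minimal_le_of_wellFoundedLT (· ∈ exponentSet I) w hw
    exact ⟨a, ⟨ha.prop, fun _ hb => ha.not_prop_of_lt hb⟩, haw⟩

end ExponentSets

section StanleyCones

variable {σ : Type*} {u v w : σ →₀ ℕ} {Z : Finset σ} {i : σ}

/-- The exponents of the monomials in the Stanley space `x^u K[Z]`. -/
def stanleyCone (u : σ →₀ ℕ) (Z : Finset σ) : Set (σ →₀ ℕ) :=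
  {w | u ≤ w ∧ ∀ i ∉ Z, w i = u i}

theorem stanleyCone_univ [Fintype σ] (u : σ →₀ ℕ) : stanleyCone u univ = Set.Ici u := by
  ext w
  simp [stanleyCone]

theorem mem_stanleyCone_erase [DecidableEq σ] :
    w ∈ stanleyCone u (Z.erase i) ↔ w ∈ stanleyCone u Z ∧ w i = u i := by
  constructor
  · rintro ⟨huw, h⟩
    exact ⟨⟨huw, fun j hj => h j (by simp [hj])⟩, h i (by simp)⟩
  · rintro ⟨⟨huw, h⟩, hi⟩
    refine ⟨huw, fun j hj => ?_⟩
    rcases eq_or_ne j i with rfl | hji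
    · exact hi
    · exact h j (by simpa [hji] using hj)

theorem mem_stanleyCone_add_single (hi : i ∈ Z) :
    w ∈ stanleyCone (u + Finsupp.single i 1) Z ↔ w ∈ stanleyCone u Z ∧ u i < w i := by
  classical
  have hle : u + Finsupp.single i 1 ≤ w ↔ u ≤ w ∧ u i < w i := by
    constructor
    · exact fun h => ⟨le_self_add.trans h, by simpa using h i⟩
    · rintro ⟨huw, hlt⟩ j
      rcases eq_or_ne j i with rfl | hji
      · simpa using hlt
      · simpa [hji] using huw j
  have hfix : (∀ j ∉ Z, w j = (u + Finsupp.single i 1 : σ →₀ ℕ) j) ↔ ∀ j ∉ Z, w j = u j := by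
    refine forall₂_congr fun j hj => ?_
    have hji : j ≠ i := fun h => hj (h ▸ hi)
    simp [hji]
  simp only [stanleyCone, Set.mem_ofPred_eq, hle, hfix, and_right_comm]

theorem add_single_mem_stanleyCone (hw : w ∈ stanleyCone u Z) (hi : i ∈ Z) :
    w + Finsupp.single i 1 ∈ stanleyCone u Z := by
  classical
  refine ⟨hw.1.trans le_self_add, fun j hj => ?_⟩
  have hji : j ≠ i := fun h => hj (h ▸ hi)
  simpa [hji] using hw.2 j hj

theorem apply_eq_add_one_of_add_single_mem_stanleyCone (hv : v ∉ stanleyCone u Z)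
    (h : v + Finsupp.single i 1 ∈ stanleyCone u Z) : u i = v i + 1 := by
  classical
  have hi : u i ≤ v i + 1 := by simpa using h.1 i
  by_contra hne
  have hiZ : i ∈ Z := by
    by_contra hiZ
    exact hne (by simpa using (h.2 i hiZ).symm)
  refine hv ⟨fun j => ?_, fun j hj => ?_⟩
  · rcases eq_or_ne j i with rfl | hji
    · omega
    · simpa [hji] using h.1 j
  · have hji : j ≠ i := fun h => hj (h ▸ hiZ)
    simpa [hji] using h.2 j hj

theorem stanleySpace_eq_restrictSupport (K : Type*) [Field K] (u : σ →₀ ℕ) (Z : Finset σ) :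
    stanleySpace K u Z = restrictSupport K (stanleyCone u Z) := by
  rw [restrictSupport_eq_span, stanleySpace, ← Set.image_image (fun w => monomial w (1 : K))]
  congr 2
  ext w
  simp only [Set.mem_image, Set.mem_ofPred_eq, Set.subset_def, mem_coe, Finsupp.mem_support_iff]
  constructor
  · rintro ⟨v, hv, rfl⟩
    exact ⟨le_self_add, fun i hi => by simpa using not_imp_comm.mp (hv i) hi⟩
  · rintro ⟨huw, h⟩
    obtain ⟨v, rfl⟩ := exists_add_of_le huw
    exact ⟨v, fun i => not_imp_comm.mp fun hi => by simpa using h i hi, rfl⟩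

theorem isStanleyDecompOfIdeal_iff {K : Type*} [Field K] {ι : Type} [Fintype ι]
    {I : Ideal (MvPolynomial σ K)} (hI : IsMonomialIdeal I) {u : ι → (σ →₀ ℕ)}
    {Z : ι → Finset σ} :
    IsStanleyDecompOfIdeal I u Z ↔
      Pairwise (Disjoint on fun i => stanleyCone (u i) (Z i)) ∧
        ⋃ i, stanleyCone (u i) (Z i) = exponentSet I := by
  simp only [IsStanleyDecompOfIdeal, stanleySpace_eq_restrictSupport,
    iSupIndep_restrictSupport_iff, iSup_restrictSupport, hI.restrictScalars_eq,
    (restrictSupport_injective K σ).eq_iff]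

end StanleyCones

section StanleyPartitions

variable {σ ι : Type*} {d e : ℕ} {V W : Set (σ →₀ ℕ)}

/-- The set `W` of exponents is a finite disjoint union of cones `u + ℕ^Z` with `|Z| ≥ d`, the
combinatorial form of a Stanley decomposition of Stanley depth at least `d`. -/
def HasStanleyPartition (d : ℕ) (W : Set (σ →₀ ℕ)) : Prop :=
  ∃ T : Finset ((σ →₀ ℕ) × Finset σ), (∀ t ∈ T, d ≤ #t.2) ∧
    (T : Set ((σ →₀ ℕ) × Finset σ)).PairwiseDisjoint (fun t => stanleyCone t.1 t.2) ∧
      ⋃ t ∈ T, stanleyCone t.1 t.2 = W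

theorem hasStanleyPartition_empty (d : ℕ) : HasStanleyPartition d (∅ : Set (σ →₀ ℕ)) :=
  ⟨∅, by simp, by simp, by simp⟩

theorem hasStanleyPartition_stanleyCone (u : σ →₀ ℕ) (Z : Finset σ) :
    HasStanleyPartition #Z (stanleyCone u Z) :=
  ⟨{(u, Z)}, by simp, by simp, by simp⟩

namespace HasStanleyPartition

theorem mono (h : HasStanleyPartition d W) (hed : e ≤ d) : HasStanleyPartition e W := by
  obtain ⟨T, hT, hpart⟩ := h
  exact ⟨T, fun t ht => hed.trans (hT t ht), hpart⟩

theorem iUnion [Finite ι] {V : ι → Set (σ →₀ ℕ)} (hV : ∀ i, HasStanleyPartition d (V i))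
    (hdisj : Pairwise (Disjoint on V)) : HasStanleyPartition d (⋃ i, V i) := by
  classical
  have := Fintype.ofFinite ι
  choose T hcard hT hTV using hV
  refine ⟨univ.biUnion T, fun t ht => ?_, ?_, ?_⟩
  · obtain ⟨i, -, hi⟩ := mem_biUnion.mp ht
    exact hcard i t hi
  · rw [coe_biUnion]
    refine Set.PairwiseDisjoint.biUnion_finset (fun i _ j _ hij => ?_) fun i _ => hT i
    simpa only [onFun, Finset.sup_set_eq_biUnion, hTV] using hdisj hij
  · simp only [mem_biUnion, mem_univ, true_and, Set.iUnion_exists]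
    rw [Set.iUnion_comm]
    exact Set.iUnion_congr hTV

theorem union (hV : HasStanleyPartition d V) (hW : HasStanleyPartition d W)
    (hdisj : Disjoint V W) : HasStanleyPartition d (V ∪ W) := by
  rw [Set.union_eq_iUnion]
  exact iUnion (Bool.forall_bool.mpr ⟨hW, hV⟩) (pairwise_disjoint_on_bool.mpr hdisj)

end HasStanleyPartition

/-- Moving the apex `u` towards `v` one unit in a direction `i ∈ Z` with `u i < v i` splits off the
facet `w i = u i` of the cone, which contains no multiple of `v`. -/
theorem hasStanleyPartition_stanleyCone_sdiff_Ici (u v : σ →₀ ℕ) (Z : Finset σ) :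
    HasStanleyPartition (#Z - 1) (stanleyCone u Z \ Set.Ici v) := by
  classical
  induction hδ : v - u using WellFoundedLT.induction generalizing u with
  | ind δ ih =>
  by_cases hvu : v ≤ u
  · have hsubset : stanleyCone u Z ⊆ Set.Ici v := fun w hw => hvu.trans hw.1
    rw [Set.sdiff_eq_empty.mpr hsubset]
    exact hasStanleyPartition_empty _
  obtain ⟨i, hi⟩ : ∃ i, u i < v i := by simpa [Finsupp.le_def] using hvu
  by_cases hiZ : i ∈ Z
  · have hlt : v - (u + Finsupp.single i 1) < δ := by
      rw [← hδ, ← tsub_tsub]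
      refine lt_of_le_of_ne tsub_le_self fun h => ?_
      have := DFunLike.congr_fun h i
      simp only [Finsupp.tsub_apply, Finsupp.single_eq_same] at this
      omega
    have hsplit : stanleyCone u Z \ Set.Ici v = stanleyCone u (Z.erase i) ∪
        stanleyCone (u + Finsupp.single i 1) Z \ Set.Ici v := by
      ext w
      simp only [Set.mem_sdiff, Set.mem_union, Set.mem_Ici, mem_stanleyCone_erase,
        mem_stanleyCone_add_single hiZ]
      have hfacet : w i = u i → ¬ v ≤ w := fun hw hvw => by have := hvw i; omega
      have hcases : w ∈ stanleyCone u Z → w i = u i ∨ u i < w i := fun hw => by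
        have := hw.1 i; omega
      tauto
    rw [hsplit]
    refine .union ?_ (ih _ hlt _ rfl) (Set.disjoint_left.mpr fun w hw hw' => ?_)
    · rw [← card_erase_of_mem hiZ]
      exact hasStanleyPartition_stanleyCone u (Z.erase i)
    · exact ((mem_stanleyCone_add_single hiZ).mp hw'.1).2.ne' (mem_stanleyCone_erase.mp hw).2
  · have hdisj : Disjoint (stanleyCone u Z) (Set.Ici v) :=
      Set.disjoint_left.mpr fun w hw hvw => (hi.trans_le (hvw i)).ne' (hw.2 i hiZ)
    rw [hdisj.sdiff_eq_left]
    exact (hasStanleyPartition_stanleyCone u Z).mono (Nat.sub_le _ _)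

namespace HasStanleyPartition

theorem sdiff_Ici (h : HasStanleyPartition d W) (v : σ →₀ ℕ) :
    HasStanleyPartition (d - 1) (W \ Set.Ici v) := by
  obtain ⟨T, hcard, hT, rfl⟩ := h
  simp only [← mem_coe]
  rw [Set.biUnion_eq_iUnion, Set.iUnion_sdiff]
  refine iUnion (fun t => ?_) fun t t' htt' => ?_
  · exact (hasStanleyPartition_stanleyCone_sdiff_Ici _ v _).mono
      (Nat.sub_le_sub_right (hcard t t.2) 1)
  · exact (hT t.2 t'.2 (Subtype.coe_injective.ne htt')).mono Set.sdiff_subset Set.sdiff_subset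

theorem sdiff_iUnion_Ici (h : HasStanleyPartition d W) (g : ι → (σ →₀ ℕ)) (J : Finset ι) :
    HasStanleyPartition (d - #J) (W \ ⋃ j ∈ J, Set.Ici (g j)) := by
  classical
  induction J using Finset.induction_on with
  | empty => simpa using h
  | insert a J ha ih =>
    rw [card_insert_of_notMem ha, ← Nat.sub_sub, Finset.set_biUnion_insert, Set.union_comm,
      ← Set.sdiff_sdiff]
    exact ih.sdiff_Ici (g a)

end HasStanleyPartition

end StanleyPartitions

section CyclicWords

theorem existsUnique_cyclic_recurrence {α : Type*} [Nonempty α] {m : ℕ} [NeZero m]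
    (F : ZMod m → α → α) (x₀ : ZMod m) (hx₀ : ∀ a b, F x₀ a = F x₀ b) :
    ∃! q : ZMod m → α, ∀ i, q i = F i (q (i - 1)) := by
  obtain ⟨a₀⟩ := ‹Nonempty α›
  let r : ℕ → α := Nat.rec (F x₀ a₀) fun j a => F (x₀ + (j + 1 : ℕ)) a
  have hcycle (i : ZMod m) : x₀ + ((i - x₀).val : ℕ) = i := by
    rw [ZMod.natCast_zmod_val, add_sub_cancel]
  refine ⟨fun i => r (i - x₀).val, fun i => ?_, fun q hq => funext fun i => ?_⟩
  · change r (i - x₀).val = F i (r (i - 1 - x₀).val)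
    rcases hj : (i - x₀).val with _ | j
    · obtain rfl : i = x₀ := by simpa [hj] using (hcycle i).symm
      exact hx₀ _ _
    · have hi : x₀ + ((j + 1 : ℕ) : ZMod m) = i := by rw [← hj, hcycle]
      have hjm : j < m := by have := ZMod.val_lt (i - x₀); omega
      have hpred : i - 1 - x₀ = (j : ZMod m) := by rw [← hi]; push_cast; ring
      rw [hpred, ZMod.val_cast_of_lt hjm, ← hi]
  · have hr (j : ℕ) : q (x₀ + (j : ℕ)) = r j := by
      induction j with
      | zero =>
        rw [Nat.cast_zero, add_zero, hq]
        exact hx₀ _ _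
      | succ j ih =>
        have hpred : x₀ + ((j + 1 : ℕ) : ZMod m) - 1 = x₀ + (j : ℕ) := by push_cast; ring
        rw [hq, hpred, ih]
    rw [← hr, hcycle]

variable {m : ℕ} {X : ZMod m → Prop} {Q : Finset (ZMod m)}

/-- Cut the cyclic word `X` of truth values into blocks `T` and `F*`, where `*` is any letter: `Q`
is the set of positions of the letters `F` that open a two-letter block. -/
def IsBlockStartSet (X : ZMod m → Prop) (Q : Finset (ZMod m)) : Prop :=
  ∀ i, i ∈ Q ↔ i - 1 ∉ Q ∧ ¬ X i

theorem existsUnique_isBlockStartSet [NeZero m] (hX : ∃ i, X i) : ∃! Q, IsBlockStartSet X Q := by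
  classical
  obtain ⟨x₀, hx₀⟩ := hX
  obtain ⟨q, hq, hq_unique⟩ := existsUnique_cyclic_recurrence
    (fun i (a : Prop) => ¬ a ∧ ¬ X i) x₀ fun a b => by simp [hx₀]
  refine ⟨({i | q i} : Finset (ZMod m)), fun i => ?_, fun Q hQ => ?_⟩
  · simpa using (hq i).to_iff
  · ext i
    have := congr_fun (hq_unique (· ∈ Q) fun i => propext (hQ i)) i
    simp [← this]

theorem two_mul_card_le_of_sub_one_notMem [NeZero m] (hQ : ∀ i ∈ Q, i - 1 ∉ Q) : 2 * #Q ≤ m := by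
  have hdisj : Disjoint Q (Q.map (Equiv.addRight 1).toEmbedding) := by
    simp only [disjoint_left, mem_map_equiv]
    simpa only [Equiv.addRight_symm, Equiv.coe_addRight, ← sub_eq_add_neg] using hQ
  have := card_le_univ (Q.disjUnion _ hdisj)
  rw [card_disjUnion, card_map, ZMod.card] at this
  omega

theorem exists_notMem_and_sub_one_notMem (hm : Odd m) (hQ : ∀ i ∈ Q, i - 1 ∉ Q) :
    ∃ i, i ∉ Q ∧ i - 1 ∉ Q := by
  by_contra! h
  have : NeZero m := ⟨hm.pos.ne'⟩
  have hmap : Q.map (Equiv.addRight 1).toEmbedding = univ \ Q := by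
    ext i
    simp only [mem_map_equiv, mem_sdiff, mem_univ, true_and, Equiv.addRight_symm,
      Equiv.coe_addRight, ← sub_eq_add_neg]
    exact ⟨fun hi hiQ => hQ i hiQ hi, h i⟩
  have := congr_arg card hmap
  rw [card_map, card_sdiff_of_subset (subset_univ Q), card_univ, ZMod.card] at this
  have := two_mul_card_le_of_sub_one_notMem hQ
  obtain ⟨k, rfl⟩ := hm
  omega

end CyclicWords

section LowerBound

variable {σ : Type*}

/-- The pattern fixes the letters `T` at the one-letter blocks and `F` at the openings of the
two-letter blocks, and leaves the second letters free. -/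
theorem setOf_isBlockStartSet_eq {m : ℕ} [NeZero m] (hm : Odd m) (g : ZMod m → (σ →₀ ℕ))
    {Q : Finset (ZMod m)} (hQ : ∀ i ∈ Q, i - 1 ∉ Q) :
    ∃ u, {w | (∃ i, g i ≤ w) ∧ IsBlockStartSet (g · ≤ w) Q} =
      Set.Ici u \ ⋃ i ∈ Q, Set.Ici (g i) := by
  classical
  obtain ⟨i₀, hi₀, hi₀'⟩ := exists_notMem_and_sub_one_notMem hm hQ
  refine ⟨({i | i ∉ Q ∧ i - 1 ∉ Q} : Finset (ZMod m)).sup g, Set.ext fun w => ?_⟩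
  simp only [IsBlockStartSet, Set.mem_ofPred_eq, Set.mem_sdiff, Set.mem_Ici, Finset.sup_le_iff,
    mem_filter, mem_univ, true_and, Set.mem_iUnion, not_exists]
  constructor
  · rintro ⟨-, h⟩
    exact ⟨fun i hi => by_contra fun hgw => hi.1 ((h i).mpr ⟨hi.2, hgw⟩),
      fun i hi => ((h i).mp hi).2⟩
  · rintro ⟨hT, hF⟩
    refine ⟨⟨i₀, hT i₀ ⟨hi₀, hi₀'⟩⟩, fun i => ⟨fun hi => ⟨hQ i hi, hF i hi⟩, fun hi => ?_⟩⟩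
    exact by_contra fun hiQ => hi.2 (hT i ⟨hiQ, hi.1⟩)

variable {K : Type*} [Field K] {I : Ideal (MvPolynomial σ K)}

theorem HasStanleyPartition.le_sdepthIdeal [Finite σ] {d : ℕ}
    (h : HasStanleyPartition d (exponentSet I)) (hI : IsMonomialIdeal I)
    (hne : (exponentSet I).Nonempty) : d ≤ sdepthIdeal I := by
  have := Fintype.ofFinite σ
  obtain ⟨T, hcard, hT, hunion⟩ := h
  simp only [← mem_coe] at hunion
  rw [Set.biUnion_eq_iUnion] at hunion
  have : Nonempty T := by
    by_contra hempty
    rw [not_nonempty_iff] at hempty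
    simp [← hunion] at hne
  let t (i : Fin #T) : (σ →₀ ℕ) × Finset σ := T.equivFin.symm i
  have hdecomp : IsStanleyDecompOfIdeal I (fun i => (t i).1) fun i => (t i).2 := by
    refine (isStanleyDecompOfIdeal_iff hI).mpr ⟨fun i j hij => ?_, ?_⟩
    · exact hT (T.equivFin.symm i).2 (T.equivFin.symm j).2
        (Subtype.coe_injective.ne (T.equivFin.symm.injective.ne hij))
    · rw [← hunion]
      exact T.equivFin.symm.surjective.iUnion_comp fun t : T => stanleyCone t.1.1 t.1.2
  refine le_csSup ⟨Fintype.card σ, ?_⟩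
    ⟨Fin #T, inferInstance, T.equivFin.nonempty_congr.mp this, _, _, hdecomp,
      fun i => hcard _ (T.equivFin.symm i).2⟩
  rintro e ⟨κ, _, ⟨i⟩, u, Z, -, hZ⟩
  exact (hZ i).trans (card_le_univ _)

variable [Fintype σ]

theorem hasStanleyPartition_iUnion_Ici_of_odd {m : ℕ} (hm : Odd m) (g : ZMod m → (σ →₀ ℕ)) :
    HasStanleyPartition (Fintype.card σ - m / 2) (⋃ i, Set.Ici (g i)) := by
  have : NeZero m := ⟨hm.pos.ne'⟩
  let V (Q : Finset (ZMod m)) : Set (σ →₀ ℕ) :=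
    {w | (∃ i, g i ≤ w) ∧ IsBlockStartSet (g · ≤ w) Q}
  have hunion : ⋃ i, Set.Ici (g i) = ⋃ Q, V Q := by
    ext w
    simp only [V, Set.mem_iUnion, Set.mem_Ici, Set.mem_ofPred_eq, exists_and_left]
    exact ⟨fun h => ⟨h, (existsUnique_isBlockStartSet h).exists⟩, And.left⟩
  rw [hunion]
  refine .iUnion (fun Q => ?_) fun Q Q' hQQ' => Set.disjoint_left.mpr fun w hw hw' =>
    hQQ' ((existsUnique_isBlockStartSet hw.1).unique hw.2 hw'.2)
  by_cases hQ : ∀ i ∈ Q, i - 1 ∉ Q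
  · obtain ⟨u, hu⟩ := setOf_isBlockStartSet_eq hm g hQ
    have hQm : #Q ≤ m / 2 := by
      have := two_mul_card_le_of_sub_one_notMem hQ
      omega
    have hIci := hasStanleyPartition_stanleyCone u univ
    rw [stanleyCone_univ, card_univ] at hIci
    rw [show V Q = _ from hu]
    exact (hIci.sdiff_iUnion_Ici g Q).mono (Nat.sub_le_sub_left hQm _)
  · have hempty : V Q = ∅ :=
      Set.eq_empty_of_forall_notMem fun w hw => hQ fun i hi => ((hw.2 i).mp hi).1
    rw [hempty]
    exact hasStanleyPartition_empty _

/-- An even number of generators is made odd by repeating one of them, which does not change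
`⌊m / 2⌋`. -/
theorem hasStanleyPartition_iUnion_Ici {ι : Type*} [Finite ι] [Nonempty ι] (g : ι → (σ →₀ ℕ)) :
    HasStanleyPartition (Fintype.card σ - Nat.card ι / 2) (⋃ i, Set.Ici (g i)) := by
  have := Fintype.ofFinite ι
  set k := Nat.card ι / 2
  obtain ⟨f⟩ : Nonempty (ι ↪ ZMod (2 * k + 1)) := by
    refine Embedding.nonempty_of_card_le ?_
    rw [ZMod.card, ← Nat.card_eq_fintype_card]
    omega
  rw [← (invFun_surjective f.injective).iUnion_comp fun i => Set.Ici (g i)]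
  have := hasStanleyPartition_iUnion_Ici_of_odd (odd_two_mul_add_one k) (g ∘ invFun f)
  rwa [show (2 * k + 1) / 2 = k by omega] at this

theorem card_sub_ncard_minimalGenerators_div_two_le_sdepthIdeal (hI : IsMonomialIdeal I)
    (hGen : (minimalGenerators I).ncard ≠ 0) :
    Fintype.card σ - (minimalGenerators I).ncard / 2 ≤ sdepthIdeal I := by
  have : Finite (minimalGenerators I) := Set.finite_of_ncard_ne_zero hGen
  obtain ⟨a, ha⟩ := Set.nonempty_of_ncard_ne_zero hGen
  have : Nonempty (minimalGenerators I) := ⟨⟨a, ha⟩⟩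
  have := hasStanleyPartition_iUnion_Ici (fun a : minimalGenerators I => a.1)
  rw [iUnion_Ici_minimalGenerators, Nat.card_coe_set_eq] at this
  exact this.le_sdepthIdeal hI ⟨a, ha.1⟩

end LowerBound

section UpperBound

theorem exists_two_mul_card_filter_lt {α : Type*} {s : Finset α} (hs : s.Nonempty)
    (r : α → α → Prop) [DecidableRel r] (hr : ∀ i ∈ s, ∀ j ∈ s, r i j → ¬ r j i) :
    ∃ i ∈ s, 2 * #{j ∈ s | r i j} < #s := by
  classical
  by_contra! h
  have hlt (i) (hi : i ∈ s) : #{j ∈ s | r i j} + #{j ∈ s | r j i} < #s := by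
    have hdisj : Disjoint ({j ∈ s | r i j} : Finset α) {j ∈ s | r j i} :=
      disjoint_filter.mpr fun j hj => hr i hi j hj
    have hi' : i ∉ ({j ∈ s | r i j} : Finset α) ∪ {j ∈ s | r j i} := by
      simpa [hi] using fun h => hr i hi i hi h h
    rw [← card_union_of_disjoint hdisj]
    refine card_lt_card ((ssubset_iff_of_subset ?_).mpr ⟨i, hi, hi'⟩)
    exact union_subset (filter_subset _ s) (filter_subset _ s)
  have hcount : ∑ i ∈ s, #{j ∈ s | r i j} = ∑ i ∈ s, #{j ∈ s | r j i} :=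
    sum_card_bipartiteAbove_eq_sum_card_bipartiteBelow r
  have hsum := sum_lt_sum_of_nonempty hs hlt
  have hle := sum_le_sum h
  rw [sum_add_distrib, ← hcount, ← two_mul, mul_sum] at hsum
  exact hsum.not_ge hle

variable {σ : Type*} [Fintype σ]

theorem exists_card_add_card_div_two_le {ι : Type*} [Nonempty ι] {u : ι → (σ →₀ ℕ)}
    {Z : ι → Finset σ} (hdisj : Pairwise (Disjoint on fun t => stanleyCone (u t) (Z t)))
    {v : σ →₀ ℕ} (hv : ∀ t, v ∉ stanleyCone (u t) (Z t)) {H : Finset σ}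
    (hH : ∀ i ∈ H, ∃ t, v + Finsupp.single i 1 ∈ stanleyCone (u t) (Z t)) :
    ∃ t, #(Z t) + #H / 2 ≤ Fintype.card σ := by
  classical
  rcases H.eq_empty_or_nonempty with rfl | hne
  · exact ⟨Classical.arbitrary ι, by simpa using card_le_univ _⟩
  choose! t ht using hH
  have happly (i) (hi : i ∈ H) : u (t i) i = v i + 1 :=
    apply_eq_add_one_of_add_single_mem_stanleyCone (hv _) (ht i hi)
  have hasymm (i) (hi : i ∈ H) (j) (hj : j ∈ H) :
      j ≠ i ∧ j ∈ Z (t i) → ¬ (i ≠ j ∧ i ∈ Z (t j)) := by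
    rintro ⟨hji, hjZ⟩ ⟨-, hiZ⟩
    have hmem_i := add_single_mem_stanleyCone (ht i hi) hjZ
    have hmem_j := add_single_mem_stanleyCone (ht j hj) hiZ
    rw [add_right_comm] at hmem_j
    have heq : t i = t j := by
      by_contra hne
      exact Set.disjoint_left.mp (hdisj hne) hmem_i hmem_j
    have hle : u (t i) j ≤ v j := by simpa [hji] using (ht i hi).1 j
    rw [heq, happly j hj] at hle
    omega
  obtain ⟨i, -, hlt⟩ := exists_two_mul_card_filter_lt hne _ hasymm
  refine ⟨t i, ?_⟩
  have hsub : Z (t i) ⊆ (univ \ H) ∪ insert i {j ∈ H | j ≠ i ∧ j ∈ Z (t i)} := by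
    intro j hj
    simp only [mem_union, mem_sdiff, mem_univ, true_and, mem_insert, mem_filter]
    tauto
  have hcard := (card_le_card hsub).trans (card_union_le _ _)
  have hinsert := card_insert_le i {j ∈ H | j ≠ i ∧ j ∈ Z (t i)}
  rw [card_sdiff_of_subset (subset_univ H), card_univ] at hcard
  have hH_card := card_le_univ H
  omega

theorem sdepthIdeal_le {K : Type*} [Field K] {I : Ideal (MvPolynomial σ K)}
    (hI : IsMonomialIdeal I) {v : σ →₀ ℕ} (hv : v ∉ exponentSet I) {H : Finset σ}
    (hH : ∀ i ∈ H, v + Finsupp.single i 1 ∈ exponentSet I) :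
    sdepthIdeal I ≤ Fintype.card σ - #H / 2 := by
  refine csSup_le' ?_
  rintro d ⟨ι, _, _, u, Z, hdecomp, hd⟩
  obtain ⟨hdisj, hunion⟩ := (isStanleyDecompOfIdeal_iff hI).mp hdecomp
  simp only [← hunion, Set.mem_iUnion, not_exists] at hv hH
  obtain ⟨t, ht⟩ := exists_card_add_card_div_two_le hdisj hv hH
  have := hd t
  omega

end UpperBound

section AssociatedPrimes

theorem exists_eq_colon_singleton_of_mem_associatedPrimes {R : Type*} [CommRing R]
    [IsNoetherianRing R] {I P : Ideal R} (hP : P ∈ associatedPrimes R (R ⧸ I)) :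
    ∃ f, P = Submodule.colon I {f} := by
  obtain ⟨-, x, hx⟩ := isAssociatedPrime_iff.mp (AssociatedPrimes.mem_iff.mp hP)
  obtain ⟨f, rfl⟩ := Ideal.Quotient.mk_surjective x
  refine ⟨f, hx.trans (Ideal.ext fun g => ?_)⟩
  rw [Submodule.mem_colon_singleton, Submodule.mem_bot, Submodule.mem_colon_singleton, smul_eq_mul,
    ← Ideal.Quotient.eq_zero_iff_mem, map_mul]
  rfl

theorem colon_singleton_eq_of_sub_mem {R : Type*} [CommRing R] {I : Ideal R} {f f' : R}
    (h : f - f' ∈ I) : Submodule.colon I {f} = Submodule.colon I {f'} := by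
  ext g
  have hg : g * f - g * f' ∈ I := mul_sub g f f' ▸ I.mul_mem_left g h
  simp only [Submodule.mem_colon_singleton, smul_eq_mul]
  exact ⟨fun h => (I.sub_mem_iff_right h).mp hg, fun h => (I.sub_mem_iff_left h).mp hg⟩

theorem colon_singleton_mul_eq {R : Type*} [CommRing R] {I P : Ideal R} [hP : P.IsPrime] {f x : R}
    (hf : P = Submodule.colon I {f}) (hx : x ∉ P) : P = Submodule.colon I {x * f} := by
  ext g
  have hgx : g ∈ P ↔ g * x ∈ P := ⟨P.mul_mem_right x, fun h => (hP.mem_or_mem h).resolve_right hx⟩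
  rw [hgx]
  conv_lhs => rw [hf]
  simp only [Submodule.mem_colon_singleton, smul_eq_mul, mul_assoc]

theorem height_le_card_of_eq_span_image {R ι : Type*} [CommRing R] [IsNoetherianRing R]
    {P : Ideal R} [P.IsPrime] {x : ι → R} {H : Finset ι} (hP : P = Ideal.span (x '' H)) :
    P.height ≤ #H := by
  classical
  have hmin : P ∈ (Ideal.span (H.image x : Set R)).minimalPrimes := by
    rw [coe_image, ← hP, Ideal.minimalPrimes_eq_subsingleton_self]
    rfl
  exact (Ideal.height_le_card_of_mem_minimalPrimes_span_finset hmin).trans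
    (Nat.cast_le.mpr card_image_le)

variable {K σ : Type*} [Field K] {I P : Ideal (MvPolynomial σ K)} {f : MvPolynomial σ K}

theorem exists_sub_mem_and_mem_support_iff (I : Ideal (MvPolynomial σ K)) (f : MvPolynomial σ K) :
    ∃ f', f - f' ∈ I ∧ ∀ a, a ∈ f'.support ↔ a ∈ f.support ∧ a ∉ exponentSet I := by
  classical
  let f' := ∑ a ∈ f.support with a ∉ exponentSet I, monomial a (coeff a f)
  have hcoeff (a) : coeff a f' = if a ∉ exponentSet I then coeff a f else 0 := by
    simp only [f', coeff_sum, coeff_monomial, sum_ite_eq', mem_filter, mem_support_iff]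
    split_ifs <;> tauto
  refine ⟨f', mem_of_forall_mem_exponentSet fun a ha => ?_, fun a => ?_⟩
  · by_contra haI
    simp [hcoeff, haI] at ha
  · simp [hcoeff, and_comm]

theorem exists_eq_colon_singleton_and_forall_add_mem_exponentSet [Finite σ]
    (hP : P ∈ associatedPrimes (MvPolynomial σ K) (MvPolynomial σ K ⧸ I)) :
    ∃ f, P = Submodule.colon I {f} ∧
      ∀ a ∈ f.support, ∀ b, b + a ∈ exponentSet I → b ∈ exponentSet P := by
  classical
  have hPp : P.IsPrime := hP.1
  obtain ⟨f, hf, hmin⟩ := exists_minimalFor_of_wellFoundedLT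
    (fun f => P = Submodule.colon I {f}) (fun f => #f.support)
    (exists_eq_colon_singleton_of_mem_associatedPrimes hP)
  refine ⟨f, hf, fun a ha b hab => ?_⟩
  by_contra hb
  -- If `x^b ∉ P`, then `x^b f` has the same colon ideal as `f` even after discarding its terms in
  -- `I`, among them `x^(b + a)`, against the minimality of `f`.
  obtain ⟨f', hf', hsupp⟩ := exists_sub_mem_and_mem_support_iff I (monomial b 1 * f)
  have hsub : f'.support ⊆ (f.support.erase a).image (b + ·) := by
    intro w hw
    obtain ⟨hw, hwI⟩ := (hsupp w).mp hw
    rw [mem_support_iff, coeff_monomial_mul', ite_ne_right_iff, one_mul, ← mem_support_iff] at hw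
    obtain ⟨c, rfl⟩ := exists_add_of_le hw.1
    rw [add_tsub_cancel_left] at hw
    refine mem_image_of_mem _ (mem_erase.mpr ⟨?_, hw.2⟩)
    rintro rfl
    exact hwI hab
  have hlt : #f'.support < #f.support :=
    ((card_le_card hsub).trans card_image_le).trans_lt (card_erase_lt_of_mem ha)
  exact hlt.not_ge (hmin ((colon_singleton_mul_eq hf hb).trans (colon_singleton_eq_of_sub_mem hf'))
    hlt.le)

theorem exists_add_mem_support_mul {f g : MvPolynomial σ K} (hf : f ≠ 0) (hg : g ≠ 0) :
    ∃ a ∈ f.support, ∃ b ∈ g.support, a + b ∈ (f * g).support := by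
  obtain ⟨a, ha, b, hb, hab⟩ := UniqueSums.uniqueAdd_of_nonempty (support_nonempty.mpr hf)
    (support_nonempty.mpr hg)
  refine ⟨a, ha, b, hb, mem_support_iff.mpr ?_⟩
  rw [show coeff (a + b) (f * g) = coeff a f * coeff b g from
    AddMonoidAlgebra.coeff_mul_add_of_uniqueAdd hab]
  exact mul_ne_zero (mem_support_iff.mp ha) (mem_support_iff.mp hb)

theorem isMonomialIdeal_colon_singleton (hI : IsMonomialIdeal I)
    (hf : ∀ a ∈ f.support, ∀ b, b + a ∈ exponentSet I → b ∈ exponentSet (Submodule.colon I {f})) :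
    IsMonomialIdeal (Submodule.colon I {f}) := by
  refine isMonomialIdeal_iff.mpr fun g hg b hb => ?_
  by_contra hbP
  obtain ⟨g', hgg', hsupp⟩ := exists_sub_mem_and_mem_support_iff (Submodule.colon I {f}) g
  have hg'f : g' * f ∈ I :=
    Submodule.mem_colon_singleton.mp ((Submodule.sub_mem_iff_right _ hg).mp hgg')
  have hg'_ne : g' ≠ 0 := support_nonempty.mp ⟨b, (hsupp b).mpr ⟨hb, hbP⟩⟩
  have hf_ne : f ≠ 0 := by
    rintro rfl
    simp [exponentSet] at hbP
  obtain ⟨c, hc, a, ha, hca⟩ := exists_add_mem_support_mul hg'_ne hf_ne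
  exact ((hsupp c).mp hc).2 (hf a ha c (isMonomialIdeal_iff.mp hI _ hg'f _ hca))

theorem IsMonomialIdeal.eq_span_X_image (hP : IsMonomialIdeal P) [hPp : P.IsPrime] :
    P = Ideal.span (X '' {i | X i ∈ P}) := by
  refine le_antisymm (fun g hg => mem_ideal_span_X_image.mpr fun b hb => ?_)
    (Ideal.span_le.mpr (Set.image_subset_iff.mpr subset_rfl))
  have hbP : monomial b 1 ∈ P := isMonomialIdeal_iff.mp hP g hg b hb
  rw [monomial_eq, C_1, one_mul, Finsupp.prod, hPp.prod_mem_iff] at hbP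
  obtain ⟨i, hi, hiP⟩ := hbP
  exact ⟨i, hPp.mem_of_pow_mem _ hiP, Finsupp.mem_support_iff.mp hi⟩

theorem exists_notMem_exponentSet_and_height_le_card [Finite σ] (hI : IsMonomialIdeal I)
    (hP : P ∈ associatedPrimes (MvPolynomial σ K) (MvPolynomial σ K ⧸ I)) :
    ∃ v ∉ exponentSet I, ∃ H : Finset σ,
      (∀ i ∈ H, v + Finsupp.single i 1 ∈ exponentSet I) ∧ P.height ≤ #H := by
  classical
  have := Fintype.ofFinite σ
  have hPp : P.IsPrime := hP.1
  obtain ⟨f, hf, hfP⟩ := exists_eq_colon_singleton_and_forall_add_mem_exponentSet hP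
  have hPmon : IsMonomialIdeal P := hf ▸ isMonomialIdeal_colon_singleton hI (hf ▸ hfP)
  have hf_ne : f ≠ 0 := by
    rintro rfl
    exact hPp.ne_top (by simp [hf])
  obtain ⟨v, hv⟩ := support_nonempty.mpr hf_ne
  refine ⟨v, fun hvI => ?_, ({i | X i ∈ P} : Finset σ), fun i hi => ?_,
    height_le_card_of_eq_span_image (by simpa using hPmon.eq_span_X_image)⟩
  · exact hPp.ne_top (P.eq_top_iff_one.mpr (hfP v hv 0 (by rwa [zero_add])))
  · have hXf : X i * f ∈ I := by
      rw [mem_filter, hf, Submodule.mem_colon_singleton] at hi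
      exact hi.2
    refine isMonomialIdeal_iff.mp hI _ hXf _ ?_
    rwa [mem_support_iff, add_comm, coeff_X_mul, ← mem_support_iff]

end AssociatedPrimes

theorem primeHt_eq_height {R : Type*} [CommRing R] (P : Ideal R) (hP : P.IsPrime) :
    primeHt P hP = P.height :=
  (PrimeSpectrum.height_eq_orderHeight ⟨P, hP⟩).symm

theorem sdepth_eq_of_height_ge_card_gens_odd_general {K σ : Type*} [Field K] [Fintype σ] {m : ℕ}
    (I : Ideal (MvPolynomial σ K)) (hI : IsMonomialIdeal I)
    (hGen : (minimalGenerators I).ncard = m) (hm : m ≠ 0) (P : Ideal (MvPolynomial σ K))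
    (hP : P ∈ associatedPrimes (MvPolynomial σ K) (MvPolynomial σ K ⧸ I))
    (hht : ((2 * (m / 2) : ℕ) : ℕ∞) ≤ P.height) :
    sdepthIdeal I = Fintype.card σ - m / 2 := by
  apply le_antisymm
  · obtain ⟨v, hv, H, hH, hPH⟩ := exists_notMem_exponentSet_and_height_le_card hI hP
    have hmH : 2 * (m / 2) ≤ #H := Nat.cast_le.mp (hht.trans hPH)
    exact (sdepthIdeal_le hI hv hH).trans (Nat.sub_le_sub_left (by omega) _)
  · subst hGen
    exact card_sub_ncard_minimalGenerators_div_two_le_sdepthIdeal hI hm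

/-- If `|G(I)| = m` is odd and some associated prime of `S/I` has height `≥ m - 1`, then
`sdepth I = n - ⌊m/2⌋`. -/
theorem sdepth_eq_of_height_ge_card_gens_odd {K : Type*} [Field K] {n m : ℕ}
    (I : Ideal (MvPolynomial (Fin n) K)) (hI : IsMonomialIdeal I)
    (hGen : (minimalGenerators I).ncard = m) (hOdd : Odd m)
    (P : Ideal (MvPolynomial (Fin n) K))
    (hP : P ∈ associatedPrimes (MvPolynomial (Fin n) K) ((MvPolynomial (Fin n) K) ⧸ I))
    (hht : ∀ h : P.IsPrime, ((m - 1 : ℕ) : ℕ∞) ≤ primeHt P h) :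
    sdepthIdeal I = n - m / 2 := by
  have hP_height : ((2 * (m / 2) : ℕ) : ℕ∞) ≤ P.height := by
    rw [Nat.two_mul_odd_div_two (Nat.odd_iff.mp hOdd), ← primeHt_eq_height P hP.1]
    exact hht hP.1
  rw [sdepth_eq_of_height_ge_card_gens_odd_general I hI hGen hOdd.pos.ne' P hP hP_height,
    Fintype.card_fin]
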